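/- Let F be a field of characteristic p > 0, let K be an algebraic closure of F, let f ∈ F[x] be a normal polynomial of degree p² with f' ≠ 0 having two distinct normal decompositions (g₁, h₁) and (g₂, h₂) with h₁ ≠ h₂, let t be transcendental over K, and let α be a root of f − t. Set M = K(h₁(α)) and N = K(h₂(α)). Then the compositum M·N equals K(α). -/

import Mathlib

/-!
Write `t = f(α)`. For a monic nonconstant `g` and `g(β) = t`, the polynomial `g(Y) - t` is
irreducible over `K(t)`, so `[K(t)(β) : K(t)] = deg g` (`finrank_adjoin_of_aeval_eq_X`). Hence
`K(α)` has degree `p²` and `M = K(h₁(α))` has degree `p` over `K(t)`, and since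
`M ⊆ M·N ⊆ K(α)`, the compositum is either `K(α)` or `M`.

If it is `M`, then `h₂(α) ∈ K(h₁(α))`. As `α` is transcendental over `K`, the polynomial `h₂` is a
rational function of `h₁`, hence a polynomial in `h₁` (`exists_eq_comp_of_mul_comp`). The degrees
agree and both are normal, so `h₁ = h₂` (`eq_of_eq_comp`), contrary to assumption.
-/

open Polynomial

section

variable {K L : Type*} [Field K] [Field L] [Algebra K L] [Algebra (RatFunc K) L]
  [IsScalarTower K (RatFunc K) L]

/-- For nonconstant monic `g`, the polynomial `g(Y) - t` is irreducible over `K(t)`: by Gauss's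
lemma this can be checked in `K[t][Y] = K[Y][t]`, where it is linear in `t`. -/
lemma irreducible_map_sub_C_X {g : K[X]} (hg : g.Monic) (hd : 0 < g.natDegree) :
    Irreducible (g.map (algebraMap K (RatFunc K)) - C RatFunc.X) ∧
      (g.map (algebraMap K (RatFunc K)) - C RatFunc.X).Monic := by
  have hmon : (g.map (C : K →+* K[X]) - C X).Monic :=
    (hg.map _).sub_of_left (degree_C_le.trans_lt (by
      rw [degree_map_eq_of_injective C_injective, ← natDegree_pos_iff_degree_pos]; exact hd))
  have hmap : (g.map (C : K →+* K[X]) - C X).map (algebraMap K[X] (RatFunc K)) =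
      g.map (algebraMap K (RatFunc K)) - C RatFunc.X := by
    rw [Polynomial.map_sub, Polynomial.map_map, map_C, RatFunc.algebraMap_X]
    rfl
  rw [← hmap]
  refine ⟨(hmon.irreducible_iff_irreducible_map_fraction_map (K := RatFunc K)).1 ?_, hmon.map _⟩
  have hswap : g.map (C : K →+* K[X]) - C X = Bivariate.swap (-(X - C g) : K[X][X]) := by
    rw [neg_sub, map_sub, Bivariate.swap_C, Bivariate.swap_Y]
  rw [hswap, MulEquiv.irreducible_iff]
  exact (Associated.neg_left (Associated.refl (X - C g))).symm.irreducible (irreducible_X_sub_C g)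

/-- If `g(β) = t` with `g` monic nonconstant, then `β` has degree `deg g` over `K(t)`. -/
lemma finrank_adjoin_of_aeval_eq_X {g : K[X]} (hg : g.Monic) (hd : 0 < g.natDegree) {β : L}
    (hβ : aeval β g = algebraMap (RatFunc K) L RatFunc.X) :
    IsIntegral (RatFunc K) β ∧
      Module.finrank (RatFunc K) (IntermediateField.adjoin (RatFunc K) {β}) = g.natDegree := by
  obtain ⟨hirr, hmon⟩ := irreducible_map_sub_C_X hg hd
  have hroot : aeval β (g.map (algebraMap K (RatFunc K)) - C RatFunc.X) = 0 := by
    rw [map_sub, aeval_map_algebraMap, aeval_C, hβ, sub_self]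
  have hint : IsIntegral (RatFunc K) β := ⟨_, hmon, hroot⟩
  refine ⟨hint, ?_⟩
  rw [IntermediateField.adjoin.finrank hint,
    ← minpoly.eq_of_irreducible_of_monic hirr hroot hmon, natDegree_sub_C, natDegree_map]

/-- A root `α` of `f - t` is transcendental over `K`, since otherwise `t = f(α)` would be
algebraic over `K`. -/
lemma transcendental_of_aeval_eq_X {f : K[X]} {α : L}
    (hα : aeval α f = algebraMap (RatFunc K) L RatFunc.X) : Transcendental K α := by
  intro halg
  refine RatFunc.transcendental_X (K := K) ?_
  rw [← isAlgebraic_algebraMap_iff (algebraMap (RatFunc K) L).injective, ← hα]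
  exact isAlgebraic_iff_isIntegral.2
    (IsIntegral.of_mem_of_fg _ (isAlgebraic_iff_isIntegral.1 halg).fg_adjoin_singleton _
      (aeval_mem_adjoin_singleton K α))

/-- Since `t = g(β)`, the elements of `K(t)(β)` are rational functions in `β` over `K`. -/
lemma exists_div_of_mem_adjoin {g : K[X]} {β x : L}
    (hβ : aeval β g = algebraMap (RatFunc K) L RatFunc.X)
    (hx : x ∈ IntermediateField.adjoin (RatFunc K) {β}) :
    ∃ r s : K[X], x = aeval β r / aeval β s := by
  rw [← IntermediateField.mem_adjoin_simple_iff K x]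
  have hpoly : ∀ q : K[X], algebraMap (RatFunc K) L (algebraMap K[X] (RatFunc K) q) ∈
      IntermediateField.adjoin K {β} := by
    intro q
    have : algebraMap (RatFunc K) L (algebraMap K[X] (RatFunc K) q) = aeval β (q.comp g) := by
      rw [aeval_comp, hβ, aeval_algebraMap_apply, ← RatFunc.algebraMap_X,
        aeval_algebraMap_apply, aeval_X_left_apply]
    rw [this, IntermediateField.mem_adjoin_simple_iff]
    exact ⟨q.comp g, 1, by simp⟩
  induction hx using IntermediateField.adjoin_induction with
  | mem y hy => exact IntermediateField.subset_adjoin _ _ hy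
  | algebraMap y =>
    rw [← RatFunc.num_div_denom y, map_div₀]
    exact div_mem (hpoly _) (hpoly _)
  | add y z _ _ hy hz => exact add_mem hy hz
  | inv y _ hy => exact inv_mem hy
  | mul y z _ _ hy hz => exact mul_mem hy hz

end

/-- If a polynomial `k` is a rational function of a nonconstant polynomial `h`, it is a polynomial
in `h`: the remainder of `r` modulo `s` composed with `h` is a multiple of `s ∘ h` of smaller
degree. -/
lemma exists_eq_comp_of_mul_comp {K : Type*} [Field K] {h k r s : K[X]} (hs : s ≠ 0)
    (hd : 0 < h.natDegree) (he : k * s.comp h = r.comp h) : ∃ q : K[X], k = q.comp h := by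
  have hcomp : ∀ u : K[X], u.comp h = 0 → u = 0 := fun u hu ↦ by
    by_contra hu0
    rcases comp_eq_zero_iff.1 hu with h0 | ⟨-, h1⟩
    · exact hu0 h0
    · rw [h1, natDegree_C] at hd
      exact hd.false
  have hr := EuclideanDomain.div_add_mod r s
  have hmod : r % s = 0 := by
    by_contra hne
    refine hne (hcomp _ (eq_zero_of_dvd_of_natDegree_lt (p := s.comp h) ⟨k - (r / s).comp h, ?_⟩ ?_))
    · have := congrArg (fun u : K[X] ↦ u.comp h) hr
      simp only [add_comp, mul_comp] at this
      linear_combination this - he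
    · rw [natDegree_comp, natDegree_comp]
      exact Nat.mul_lt_mul_of_pos_right (natDegree_lt_natDegree hne (degree_mod_lt r hs)) hd
  refine ⟨r / s, mul_right_cancel₀ (fun h0 ↦ hs (hcomp s h0)) (b := s.comp h) ?_⟩
  rw [he, ← mul_comp, mul_comm (r / s) s]
  rw [hmod, add_zero] at hr
  rw [hr]

/-- If `k = q ∘ h` with `h` and `k` normal of the same positive degree, then `q` is linear and
normal, that is `q = X`, so `h = k`. -/
lemma eq_of_eq_comp {K : Type*} [Field K] {h k q : K[X]} (hh : h.Monic) (hk : k.Monic)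
    (hh0 : h.coeff 0 = 0) (hk0 : k.coeff 0 = 0) (hd : 0 < h.natDegree)
    (hdeg : h.natDegree = k.natDegree) (he : k = q.comp h) : h = k := by
  have hq1 : q.natDegree = 1 := by
    have := congrArg natDegree he
    rw [natDegree_comp, ← hdeg] at this
    exact Nat.eq_of_mul_eq_mul_right hd (by omega)
  have hlead : q.leadingCoeff = 1 := by
    have := congrArg leadingCoeff he
    rw [leadingCoeff_comp hd.ne', hk.leadingCoeff, hh.leadingCoeff, one_pow, mul_one] at this
    exact this.symm
  rw [leadingCoeff, hq1] at hlead
  rw [eq_X_add_C_of_natDegree_le_one hq1.le, hlead, C_1, one_mul, add_comp, X_comp, C_comp] at he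
  have h0 := congrArg (fun u : K[X] ↦ u.coeff 0) he
  simp only [coeff_add, hh0, hk0, coeff_C_zero, zero_add] at h0
  rw [he, ← h0, C_0, add_zero]

/-- The two factors of a decomposition of degree `p ^ 2` both have degree `p`. -/
lemma natDegree_eq_of_mul {p a b : ℕ} (hp : p.Prime) (ha : 2 ≤ a) (hb : 2 ≤ b)
    (h : p ^ 2 = a * b) : a = p ∧ b = p := by
  exact (Nat.Prime.mul_eq_prime_sq_iff hp (by omega) (by omega)).1 h.symm

/-- The theorem over the field of constants `K` itself. -/
lemma adjoin_sup_adjoin_eq {K L : Type*} [Field K] [Field L] [Algebra K L] [Algebra (RatFunc K) L]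
    [IsScalarTower K (RatFunc K) L] {p : ℕ} (hp : p.Prime) {f g₁ h₁ g₂ h₂ : K[X]}
    (hf : f.Monic) (hg₁ : g₁.Monic) (hg₂ : g₂.Monic) (hh₁ : h₁.Monic) (hh₂ : h₂.Monic)
    (h₁0 : h₁.coeff 0 = 0) (h₂0 : h₂.coeff 0 = 0)
    (dg₁ : g₁.natDegree = p) (dh₁ : h₁.natDegree = p)
    (dh₂ : h₂.natDegree = p) (dg₂ : g₂.natDegree = p)
    (hdec₁ : f = g₁.comp h₁) (hdec₂ : f = g₂.comp h₂) (hne : h₁ ≠ h₂) {α : L}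
    (hα : aeval α f = algebraMap (RatFunc K) L RatFunc.X) :
    IntermediateField.adjoin (RatFunc K) {aeval α h₁} ⊔
      IntermediateField.adjoin (RatFunc K) {aeval α h₂} =
      IntermediateField.adjoin (RatFunc K) {α} := by
  have df : f.natDegree = p ^ 2 := by rw [hdec₁, natDegree_comp, dg₁, dh₁, sq]
  have hβ₁ : aeval (aeval α h₁) g₁ = algebraMap (RatFunc K) L RatFunc.X := by
    rw [← aeval_comp, ← hdec₁, hα]
  have hβ₂ : aeval (aeval α h₂) g₂ = algebraMap (RatFunc K) L RatFunc.X := by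
    rw [← aeval_comp, ← hdec₂, hα]
  obtain ⟨iα, rα⟩ := finrank_adjoin_of_aeval_eq_X hf (df ▸ pow_pos hp.pos 2) hα
  obtain ⟨i₁, r₁⟩ := finrank_adjoin_of_aeval_eq_X hg₁ (dg₁ ▸ hp.pos) hβ₁
  obtain ⟨i₂, r₂⟩ := finrank_adjoin_of_aeval_eq_X hg₂ (dg₂ ▸ hp.pos) hβ₂
  have htr : Function.Injective (aeval α : K[X] →ₐ[K] L) :=
    transcendental_iff_injective.1 (transcendental_of_aeval_eq_X hα)
  have := IntermediateField.adjoin.finiteDimensional iα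
  have := IntermediateField.adjoin.finiteDimensional i₁
  have := IntermediateField.adjoin.finiteDimensional i₂
  have hle : ∀ h : K[X], IntermediateField.adjoin (RatFunc K) {aeval α h} ≤
      IntermediateField.adjoin (RatFunc K) {α} := fun h ↦ by
    rw [IntermediateField.adjoin_simple_le_iff, ← aeval_map_algebraMap (RatFunc K)]
    exact IntermediateField.algebra_adjoin_le_adjoin _ _ (aeval_mem_adjoin_singleton _ _)
  have hsup := sup_le (hle h₁) (hle h₂)
  have hdvd := IntermediateField.finrank_dvd_of_le_right hsup
  have hdvd' := IntermediateField.finrank_dvd_of_le_right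
    (le_sup_left (a := IntermediateField.adjoin (RatFunc K) {aeval α h₁})
      (b := IntermediateField.adjoin (RatFunc K) {aeval α h₂}))
  rw [rα, df] at hdvd
  rw [r₁, dg₁] at hdvd'
  obtain ⟨m, hm, hrank⟩ := (Nat.dvd_prime_pow hp).1 hdvd
  interval_cases m
  · rw [hrank, pow_zero] at hdvd'
    exact absurd hdvd' hp.not_dvd_one
  · -- The compositum has degree `p`, so it equals `K(h₁(α))`, which therefore contains `h₂(α)`.
    exfalso
    have heq := IntermediateField.eq_of_le_of_finrank_eq
      (le_sup_left (a := IntermediateField.adjoin (RatFunc K) {aeval α h₁})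
        (b := IntermediateField.adjoin (RatFunc K) {aeval α h₂}))
      (by rw [r₁, dg₁, hrank, pow_one])
    have hmem : aeval α h₂ ∈ IntermediateField.adjoin (RatFunc K) {aeval α h₁} := by
      rw [heq]
      exact le_sup_right (a := IntermediateField.adjoin (RatFunc K) {aeval α h₁})
        (IntermediateField.mem_adjoin_simple_self _ _)
    obtain ⟨r, s, hrs⟩ := exists_div_of_mem_adjoin hβ₁ hmem
    have hs : aeval (aeval α h₁) s ≠ 0 := by
      intro h0
      rw [h0, div_zero] at hrs
      exact hh₂.ne_zero (htr (by rw [hrs, map_zero]))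
    rw [eq_div_iff hs, ← aeval_comp, ← aeval_comp, ← map_mul] at hrs
    obtain ⟨q, hq⟩ := exists_eq_comp_of_mul_comp (by rintro rfl; simp at hs)
      (dh₁ ▸ hp.pos) (htr hrs)
    exact hne (eq_of_eq_comp hh₁ hh₂ h₁0 h₂0 (dh₁ ▸ hp.pos) (dh₁.trans dh₂.symm) hq)
  · exact IntermediateField.eq_of_le_of_finrank_eq hsup (by rw [hrank, rα, df])



set_option synthInstance.maxHeartbeats 1000000 in
/-- **Claim.** Let `F` have characteristic `p > 0` with algebraic closure `K`, let
`f ∈ F[x]` be a normal polynomial of degree `p²` with `f' ≠ 0` having two distinct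
normal decompositions `(g₁, h₁)` and `(g₂, h₂)` (`h₁ ≠ h₂`), let `t` be transcendental
over `K` and `α` a root of `f − t`.  With `M = K(h₁(α))` and `N = K(h₂(α))`, the
compositum `M·N` equals `K(α)`. -/
theorem compositum_of_two_decompositions_eq_top
    {F : Type*} [Field F] (p : ℕ) [Fact p.Prime] [CharP F p]
    (f g₁ h₁ g₂ h₂ : F[X])
    (hmonic : f.Monic) (hnormal : f.coeff 0 = 0)
    (hdeg : f.natDegree = p ^ 2) (hf' : derivative f ≠ 0)
    (hg₁ : g₁.Monic ∧ g₁.coeff 0 = 0 ∧ 2 ≤ g₁.natDegree)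
    (hh₁ : h₁.Monic ∧ h₁.coeff 0 = 0 ∧ 2 ≤ h₁.natDegree)
    (hg₂ : g₂.Monic ∧ g₂.coeff 0 = 0 ∧ 2 ≤ g₂.natDegree)
    (hh₂ : h₂.Monic ∧ h₂.coeff 0 = 0 ∧ 2 ≤ h₂.natDegree)
    (hdec₁ : f = g₁.comp h₁) (hdec₂ : f = g₂.comp h₂) (hne : h₁ ≠ h₂)
    (α : AlgebraicClosure (RatFunc (AlgebraicClosure F)))
    (hα : aeval α (f.map (algebraMap F (AlgebraicClosure F))) =
      algebraMap (RatFunc (AlgebraicClosure F))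
        (AlgebraicClosure (RatFunc (AlgebraicClosure F))) RatFunc.X) :
    IntermediateField.adjoin (RatFunc (AlgebraicClosure F))
        {aeval α (h₁.map (algebraMap F (AlgebraicClosure F)))} ⊔
      IntermediateField.adjoin (RatFunc (AlgebraicClosure F))
        {aeval α (h₂.map (algebraMap F (AlgebraicClosure F)))} =
      IntermediateField.adjoin (RatFunc (AlgebraicClosure F)) {α} := by
  have hp : p.Prime := Fact.out
  obtain ⟨dg₁, dh₁⟩ := natDegree_eq_of_mul hp hg₁.2.2 hh₁.2.2
    (by rw [← hdeg, ← natDegree_comp, ← hdec₁])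
  obtain ⟨dg₂, dh₂⟩ := natDegree_eq_of_mul hp hg₂.2.2 hh₂.2.2
    (by rw [← hdeg, ← natDegree_comp, ← hdec₂])
  exact adjoin_sup_adjoin_eq (g₁ := g₁.map (algebraMap F (AlgebraicClosure F)))
    (g₂ := g₂.map (algebraMap F (AlgebraicClosure F))) hp (hmonic.map _) (hg₁.1.map _) (hg₂.1.map _) (hh₁.1.map _)
    (hh₂.1.map _) (by rw [coeff_map, hh₁.2.1, map_zero]) (by rw [coeff_map, hh₂.2.1, map_zero])
    (by rw [natDegree_map, dg₁]) (by rw [natDegree_map, dh₁])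
    (by rw [natDegree_map, dh₂]) (by rw [natDegree_map, dg₂])
    (by rw [hdec₁, Polynomial.map_comp]) (by rw [hdec₂, Polynomial.map_comp])
    (fun h ↦ hne (map_injective _ (algebraMap F (AlgebraicClosure F)).injective h)) hα
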